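/- arXiv:1904.10706 — 4 statements merged into one kernel-verified Lean document; each statement's English description precedes it below -/
import Mathlib

section
/- Let H be a finite set and f a map from subsets of H to a linearly ordered set T satisfying Monotonicity, and suppose every basis of (H, f) has cardinality at most d. Let I be a finite index set, π : I → H, and let Q ⊆ I be any finite subset. Then the number of indices i ∈ Q with f(π(Q ∖ {i})) < f(π(Q)) is at most d. -/
open Finset

/-!
When `π` is the identity, the bound holds because an index whose removal lowers the value lies in
every basis of the same value. The general case reduces to this one: the function `R ↦ f (π(R))` on
sets of indices is again monotone, and `π` maps each of its bases injectively onto a basis of `f`,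
so passing to a multiset does not increase the combinatorial dimension.
-/

/-- `B` is a basis of `f`: everything strictly below `B` has a strictly smaller value. The bases of
an LP-type problem are the case `β = Finset α`, ordered by inclusion. -/
def IsLPBasis {β T : Type*} [Preorder β] [Preorder T] (f : β → T) (B : β) : Prop :=
  ∀ B' : β, B' < B → f B' < f B

section

variable {α ι T : Type*} [DecidableEq α] [Preorder T]

theorem exists_isLPBasis_le {β : Type*} [Preorder β] [WellFoundedLT β] {f : β → T}
    (hf : Monotone f) (S : β) : ∃ B ≤ S, IsLPBasis f B ∧ f S ≤ f B := by
  obtain ⟨B, hBS, hB⟩ := exists_minimal_le_of_wellFoundedLT (f S ≤ f ·) S le_rfl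
  refine ⟨B, hBS, fun B' hB' ↦ (hf hB'.le).lt_of_not_ge fun hle ↦ ?_, hB.prop⟩
  exact hB.not_prop_of_lt hB' (hB.prop.trans hle)

theorem mem_of_map_erase_lt {f : Finset α → T} (hf : Monotone f) {B Q : Finset α} {i : α}
    (hBQ : B ⊆ Q) (hQB : f Q ≤ f B) (hi : f (Q.erase i) < f Q) : i ∈ B := by
  by_contra hiB
  exact hi.not_ge (hQB.trans (hf (subset_erase.mpr ⟨hBQ, hiB⟩)))

theorem card_filter_map_erase_lt_le [DecidableLT T] {f : Finset α → T} (hf : Monotone f)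
    {d : ℕ} (dim : ∀ B, IsLPBasis f B → #B ≤ d) (Q : Finset α) :
    #{i ∈ Q | f (Q.erase i) < f Q} ≤ d := by
  obtain ⟨B, hBQ, hB, hQB⟩ := exists_isLPBasis_le hf Q
  have hsub : {i ∈ Q | f (Q.erase i) < f Q} ⊆ B := fun i hi ↦
    mem_of_map_erase_lt hf hBQ hQB (mem_filter.mp hi).2
  exact (card_le_card hsub).trans (dim B hB)

namespace IsLPBasis

variable {f : Finset α → T} {π : ι → α} {R : Finset ι}

theorem eq_of_image_eq (hR : IsLPBasis (fun S ↦ f (S.image π)) R) {S : Finset ι} (hSR : S ⊆ R)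
    (himage : S.image π = R.image π) : S = R := by
  by_contra hne
  exact (hR S (hSR.ssubset_of_ne hne)).ne (congrArg f himage)

theorem injOn (hR : IsLPBasis (fun S ↦ f (S.image π)) R) : Set.InjOn π R := by
  have hsurj : Set.SurjOn π R (R.image π) := coe_image (f := π) ▸ Set.surjOn_image π R
  obtain ⟨S, hSR, hinj, himage⟩ := exists_subset_injOn_image_eq_of_surjOn _ _ hsurj
  rwa [← hR.eq_of_image_eq (mod_cast hSR) himage]

theorem image (hR : IsLPBasis (fun S ↦ f (S.image π)) R) : IsLPBasis f (R.image π) := by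
  intro B' hB'
  obtain ⟨S, hSR, rfl⟩ := subset_image_iff.mp hB'.subset
  exact hR S (hSR.ssubset_of_ne fun h ↦ hB'.ne (congrArg (Finset.image π) h))

end IsLPBasis

theorem stmt_1_general [DecidableEq ι] [DecidableLT T] {f : Finset α → T} (hf : Monotone f)
    {d : ℕ} (dim : ∀ B, IsLPBasis f B → #B ≤ d) (π : ι → α) (Q : Finset ι) :
    #{i ∈ Q | f ((Q.erase i).image π) < f (Q.image π)} ≤ d := by
  have dim_image (R : Finset ι) (hR : IsLPBasis (fun S ↦ f (S.image π)) R) : #R ≤ d :=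
    card_image_of_injOn hR.injOn ▸ dim _ hR.image
  exact card_filter_map_erase_lt_le (hf.comp (image_mono π)) dim_image Q

end

/-- If every basis of `(H, f)` has cardinality at most `d` (and `f` is monotone),
then for any finite subset `Q` of the index set, at most `d` indices `i ∈ Q`
satisfy `f(π(Q \ {i})) < f(π(Q))`. -/
theorem stmt_1 {α ι T : Type*} [DecidableEq α] [DecidableEq ι] [LinearOrder T]
    (f : Finset α → T)
    (mono : ∀ F G : Finset α, F ⊆ G → f F ≤ f G)
    (d : ℕ)
    (dim : ∀ B : Finset α, (∀ B' : Finset α, B' ⊂ B → f B' < f B) → B.card ≤ d)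
    (π : ι → α) (Q : Finset ι) :
    (Q.filter (fun i : ι => f ((Q.erase i).image π) < f (Q.image π))).card ≤ d :=
  stmt_1_general (fun F G hFG ↦ mono F G hFG) dim π Q
end

section
/- Let (H, f) be an LP-type problem with |H| = n, let d ≥ 1, and let B ⊆ H be an optimal basis (f(B) = f(H)) with |B| ≤ d. Let k ≥ 1 and consider multiplicity functions μ_0, μ_1, …, μ_{k·d} : H → ℕ with μ_0(h) = 1 for all h, such that for every t < k·d there is a set R_t ⊆ H whose violator set V_t = { h ∈ H : f(R_t) < f(R_t ∪ {h}) } is nonempty, the iteration is successful, i.e. Σ_{h ∈ V_t} μ_t(h) ≤ (Σ_{h ∈ H} μ_t(h)) / (3d), and μ_{t+1}(h) = 2·μ_t(h) for h ∈ V_t and μ_{t+1}(h) = μ_t(h) otherwise. Then 2^k ≤ Σ_{h ∈ B} μ_{k·d}(h) and Σ_{h ∈ H} μ_{k·d}(h) < n · e^{k/3}. -/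
open Finset

/-!
Locality forces every nonempty violator set to meet the optimal basis `B`: adding to `R` elements
that do not violate it leaves the value unchanged, so if no element of `B` violated `R`, then
`f R = f (R ∪ B)` would already be the maximum. Hence each of the `k * d` iterations doubles the
multiplicity of some element of `B`, and by pigeonhole one of the at most `d` elements of `B` is
doubled at least `k` times. On the other hand, each iteration multiplies the total multiplicity by
at most `1 + 1 / (3 * d)`, and `1 + x < exp x` for `x ≠ 0`.
-/

section LPType

variable {α T : Type*} [DecidableEq α] [PartialOrder T] {f : Finset α → T}

/-- An LP-type problem, with constraints `α` and value function `f`, whose values are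
allowed to be only partially ordered. -/
structure IsLPType (f : Finset α → T) : Prop where
  mono : Monotone f
  locality : ∀ ⦃F G : Finset α⦄, F ⊆ G → f F = f G →
    ∀ h, f G < f (insert h G) → f F < f (insert h F)

theorem IsLPType.apply_union_eq_of_forall_not_lt (hf : IsLPType f) {R S : Finset α}
    (hS : ∀ h ∈ S, ¬ f R < f (insert h R)) : f (R ∪ S) = f R := by
  induction S using Finset.induction_on with
  | empty => rw [union_empty]
  | insert h S _ ih =>
    have hRS : f (R ∪ S) = f R := ih fun g hg => hS g (mem_insert_of_mem hg)
    have not_violates : ¬ f (R ∪ S) < f (insert h (R ∪ S)) := fun hlt =>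
      hS h (mem_insert_self h S) (hf.locality subset_union_left hRS.symm h hlt)
    rw [union_insert, ← hRS]
    exact ((hf.mono (subset_insert h (R ∪ S))).eq_of_not_lt not_violates).symm

variable [Fintype α] [DecidableLT T]

/-- The violator set of `R`: the constraints whose addition to `R` increases the value. -/
def violators (f : Finset α → T) (R : Finset α) : Finset α :=
  {h | f R < f (insert h R)}

theorem mem_violators {R : Finset α} {h : α} : h ∈ violators f R ↔ f R < f (insert h R) := by
  simp only [violators, mem_filter_univ]

theorem IsLPType.inter_violators_nonempty (hf : IsLPType f) {B R : Finset α}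
    (hB : f B = f univ) (hR : (violators f R).Nonempty) : (B ∩ violators f R).Nonempty := by
  by_contra! hdisj
  obtain ⟨h, hh⟩ := hR
  have hunion : f (R ∪ B) = f R := hf.apply_union_eq_of_forall_not_lt fun b hb hlt =>
    notMem_empty b (hdisj ▸ mem_inter.mpr ⟨hb, mem_violators.mpr hlt⟩)
  have hle : f (insert h R) ≤ f R := calc
    f (insert h R) ≤ f univ := hf.mono (subset_univ _)
    _ = f B := hB.symm
    _ ≤ f (R ∪ B) := hf.mono subset_union_right
    _ = f R := hunion
  exact (mem_violators.mp hh).not_ge hle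

end LPType

section Doubling

variable {α : Type*} [DecidableEq α]

theorem exists_mem_le_card_filter_mem {ι : Type*} {s : Finset ι} {B : Finset α}
    {V : ι → Finset α} {k : ℕ} (hB : B.Nonempty) (hV : ∀ t ∈ s, (B ∩ V t).Nonempty)
    (hcard : #B * k ≤ #s) : ∃ b ∈ B, k ≤ #{t ∈ s | b ∈ V t} := by
  have : Nonempty α := hB.to_type
  choose! g hg using hV
  obtain ⟨b, hb, hkb⟩ := exists_le_card_fiber_of_mul_le_card_of_maps_to
    (fun t ht => mem_of_mem_inter_left (hg t ht)) hB hcard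
  refine ⟨b, hb, hkb.trans (card_le_card fun t ht => ?_)⟩
  obtain ⟨hts, rfl⟩ := mem_filter.mp ht
  exact mem_filter.mpr ⟨hts, mem_of_mem_inter_right (hg t hts)⟩

/-- The weights `w t` evolve by doubling: each step `t < N` doubles the weights on `V t` and keeps
the others. Nothing is required of later steps. -/
def IsDoublingSequence {M : Type*} [Semiring M] (w : ℕ → α → M) (V : ℕ → Finset α) (N : ℕ) :
    Prop :=
  ∀ t < N, ∀ h, w (t + 1) h = if h ∈ V t then 2 * w t h else w t h

namespace IsDoublingSequence

variable {M : Type*} [Semiring M] {w : ℕ → α → M} {V : ℕ → Finset α} {N : ℕ}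

theorem natCast {μ : ℕ → α → ℕ} (hμ : IsDoublingSequence μ V N) :
    IsDoublingSequence (fun t h => (μ t h : M)) V N := fun t ht h => by
  simp only [hμ t ht h, Nat.cast_ite, Nat.cast_mul, Nat.cast_ofNat]

theorem apply_eq_two_pow_mul (hw : IsDoublingSequence w V N) (h : α) :
    w N h = 2 ^ #{t ∈ range N | h ∈ V t} * w 0 h := by
  induction N with
  | zero => simp
  | succ N ih =>
    rw [hw N N.lt_succ_self, ih fun t ht => hw t (ht.trans N.lt_succ_self), range_add_one,
      filter_insert]
    split_ifs
    · rw [card_insert_of_notMem (by simp), pow_succ', mul_assoc]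
    · rfl

theorem exists_two_pow_mul_le [PartialOrder M] [IsOrderedRing M]
    (hw : IsDoublingSequence w V N) {B : Finset α} {k : ℕ} (hB : B.Nonempty)
    (hw0 : ∀ b ∈ B, 0 ≤ w 0 b) (hV : ∀ t < N, (B ∩ V t).Nonempty) (hcard : #B * k ≤ N) :
    ∃ b ∈ B, 2 ^ k * w 0 b ≤ w N b := by
  obtain ⟨b, hb, hkb⟩ := exists_mem_le_card_filter_mem hB
    (fun t ht => hV t (mem_range.mp ht)) (hcard.trans_eq (card_range N).symm)
  refine ⟨b, hb, ?_⟩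
  rw [hw.apply_eq_two_pow_mul]
  exact mul_le_mul_of_nonneg_right (pow_le_pow_right₀ one_le_two hkb) (hw0 b hb)

variable [Fintype α]

theorem sum_succ (hw : IsDoublingSequence w V N) {t : ℕ} (ht : t < N) :
    ∑ h, w (t + 1) h = ∑ h, w t h + ∑ h ∈ V t, w t h := calc
  ∑ h, w (t + 1) h = ∑ h, (w t h + if h ∈ V t then w t h else 0) :=
    sum_congr rfl fun h _ => by rw [hw t ht h]; split_ifs <;> simp only [two_mul, add_zero]
  _ = ∑ h, w t h + ∑ h ∈ V t, w t h := by rw [sum_add_distrib, sum_ite_mem, univ_inter]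

theorem sum_le_one_add_pow_mul {w : ℕ → α → ℝ} (hw : IsDoublingSequence w V N) {c : ℝ}
    (hc : 0 ≤ 1 + c) (hV : ∀ t < N, ∑ h ∈ V t, w t h ≤ c * ∑ h, w t h) :
    ∑ h, w N h ≤ (1 + c) ^ N * ∑ h, w 0 h :=
  le_geom (u := fun t => ∑ h, w t h) hc N fun t ht => by
    rw [hw.sum_succ ht, one_add_mul]
    exact add_le_add_right (hV t ht) _

end IsDoublingSequence

end Doubling

theorem one_add_pow_lt_exp_mul {x : ℝ} (hx : -1 ≤ x) (hx0 : x ≠ 0) {n : ℕ} (hn : n ≠ 0) :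
    (1 + x) ^ n < Real.exp (n * x) := by
  rw [Real.exp_nat_mul, add_comm]
  exact pow_lt_pow_left₀ (Real.add_one_lt_exp hx0) (by linarith) hn

theorem stmt_3_general {α T : Type*} [Fintype α] [DecidableEq α] [PartialOrder T] [DecidableLT T]
    {f : Finset α → T} (hf : IsLPType f) {d : ℕ} (hd : 1 ≤ d) {B : Finset α}
    (hBopt : f B = f univ) (hBcard : #B ≤ d) {k : ℕ} (hk : 1 ≤ k)
    {μ : ℕ → α → ℕ} {R : ℕ → Finset α} (hμ0 : ∀ h, μ 0 h = 1)
    (hVne : ∀ t < k * d, (violators f (R t)).Nonempty)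
    (hsucc : ∀ t < k * d,
      ∑ h ∈ violators f (R t), (μ t h : ℝ) ≤ (∑ h, (μ t h : ℝ)) / (3 * d))
    (hμ : IsDoublingSequence μ (fun t => violators f (R t)) (k * d)) :
    2 ^ k ≤ ∑ h ∈ B, μ (k * d) h ∧
      ∑ h, (μ (k * d) h : ℝ) < Fintype.card α * Real.exp (k / 3) := by
  have hkd : 0 < k * d := Nat.mul_pos hk hd
  have hmeets : ∀ t < k * d, (B ∩ violators f (R t)).Nonempty := fun t ht =>
    hf.inter_violators_nonempty hBopt (hVne t ht)
  have hB : B.Nonempty := (hmeets 0 hkd).mono inter_subset_left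
  constructor
  · obtain ⟨b, hb, hkb⟩ := hμ.exists_two_pow_mul_le hB (fun _ _ => Nat.zero_le _) hmeets
      ((Nat.mul_le_mul_right k hBcard).trans_eq (mul_comm d k))
    rw [hμ0, mul_one] at hkb
    exact hkb.trans (single_le_sum_of_canonicallyOrdered hb)
  · have : Nonempty α := hB.to_type
    have hc : (0 : ℝ) < 1 / (3 * d) := by positivity
    calc ∑ h, (μ (k * d) h : ℝ)
        ≤ (1 + 1 / (3 * d) : ℝ) ^ (k * d) * ∑ h, (μ 0 h : ℝ) :=
          hμ.natCast.sum_le_one_add_pow_mul (by positivity) fun t ht =>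
            (hsucc t ht).trans_eq (by ring)
      _ = Fintype.card α * (1 + 1 / (3 * d) : ℝ) ^ (k * d) := by simp [hμ0, mul_comm]
      _ < Fintype.card α * Real.exp ((k * d : ℕ) * (1 / (3 * d))) := by
          gcongr
          exact one_add_pow_lt_exp_mul (by linarith) hc.ne' hkd.ne'
      _ = Fintype.card α * Real.exp (k / 3) := by
          congr 2
          push_cast
          field_simp

/-- Lemma 2 (multiplicity growth in Clarkson's algorithm): after `k·d`
successful iterations (each doubling the multiplicities of the nonempty
violator set, which has total multiplicity at most a `1/(3d)` fraction),
the total multiplicity of an optimal basis `B` is at least `2^k`, while the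
total multiplicity of all of `H` is less than `n · e^{k/3}`. -/
theorem stmt_3 {α T : Type*} [Fintype α] [DecidableEq α] [LinearOrder T]
    (f : Finset α → T)
    (mono : ∀ F G : Finset α, F ⊆ G → f F ≤ f G)
    (locality : ∀ F G : Finset α, F ⊆ G → f F = f G →
      ∀ h : α, f G < f (insert h G) → f F < f (insert h F))
    (n : ℕ) (hn : Fintype.card α = n)
    (d : ℕ) (hd : 1 ≤ d)
    (B : Finset α)
    (hBopt : f B = f Finset.univ)
    (hBbasis : ∀ B' : Finset α, B' ⊂ B → f B' < f B)
    (hBcard : B.card ≤ d)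
    (k : ℕ) (hk : 1 ≤ k)
    (μ : ℕ → α → ℕ) (R : ℕ → Finset α)
    (hμ0 : ∀ h : α, μ 0 h = 1)
    (hVne : ∀ t < k * d,
      (Finset.univ.filter (fun h : α => f (R t) < f (insert h (R t)))).Nonempty)
    (hsucc : ∀ t < k * d,
      (∑ h ∈ Finset.univ.filter (fun h : α => f (R t) < f (insert h (R t))),
          (μ t h : ℝ))
        ≤ (∑ h : α, (μ t h : ℝ)) / (3 * d))
    (hupd : ∀ t < k * d, ∀ h : α,
      μ (t + 1) h = if f (R t) < f (insert h (R t)) then 2 * μ t h else μ t h) :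
    2 ^ k ≤ ∑ h ∈ B, μ (k * d) h ∧
      (∑ h : α, (μ (k * d) h : ℝ)) < n * Real.exp (k / 3) :=
  hn ▸ stmt_3_general ⟨fun F G => mono F G, fun F G => locality F G⟩ hd hBopt hBcard hk hμ0 hVne
    hsucc fun t ht h => by simp only [mem_violators, hupd t ht h]
end

section
/- Let (H, f) be an LP-type problem of combinatorial dimension at most d (d ≥ 1), let I be a finite index set with |I| = m, and let π : I → H. Let k ≥ 1 and 1 ≤ r be integers with r < m/2 − k, and let c ≥ 1 be a real number. For each r-element subset R ⊆ I define W_R = { i ∈ I : f(π(R)) < f(π(R) ∪ {π(i)}) }. Then the number of r-element subsets R of I with |W_R| ≥ 2c · k · d · (m − r)/(r + 1) is at most C(m, r)/c^k; equivalently, for a uniformly random r-element subset R, the probability that |W_R| ≥ 2c · k · d · (m − r)/(r + 1) is at most 1/c^k. -/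
open Finset

/-!
Restricted to an index set `Q`, the value of `f` is already attained on a basis with at most `d`
elements. If a nonempty `K ⊆ Q` consists of violators of `Q \ K`, then `K` must meet that basis,
and removing a common element leaves a pair of the same kind; so `Q` has at most `d ^ k` such
subsets `K` of size `k`. Counting the pairs `(R, K)` with `K` a `k`-set of violators of `R` through
`Q = R ∪ K` therefore bounds the `k`-th binomial moment of the number of violators by
`C(m, r + k) * d ^ k`, and Markov's inequality for this moment gives the tail bound.
-/

namespace LPType

section Binomial

section CommRing

variable {𝕜 : Type*} [CommRing 𝕜] [LinearOrder 𝕜] [IsStrictOrderedRing 𝕜]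

theorem pow_le_choose_of_mul_le {x : 𝕜} (hx : 1 ≤ x) {n k : ℕ} (h : k * x ≤ n) :
    x ^ k ≤ n.choose k := by
  induction k generalizing n with
  | zero => simp
  | succ k ih =>
    have hk : (0 : 𝕜) < k + 1 := by positivity
    push_cast at h
    cases n with
    | zero =>
      have : 0 < (k + 1) * x := by positivity
      simp only [Nat.cast_zero] at h
      exact absurd h this.not_ge
    | succ n =>
      push_cast at h
      have hchoose : ((n + 1 : 𝕜) * n.choose k) = (n + 1).choose (k + 1) * (k + 1) := by
        exact_mod_cast Nat.add_one_mul_choose_eq n k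
      refine le_of_mul_le_mul_right ?_ hk
      calc x ^ (k + 1) * (k + 1) = (k + 1) * x * x ^ k := by ring
        _ ≤ (n + 1) * n.choose k := by
          gcongr
          exact ih (by linarith)
        _ = (n + 1).choose (k + 1) * (k + 1) := hchoose

/-- Markov's inequality for the `k`-th binomial moment. -/
theorem card_filter_mul_pow_le_sum_choose {β : Type*} (s : Finset β) (N : β → ℕ) {x : 𝕜}
    (hx : 1 ≤ x) (k : ℕ) :
    #{b ∈ s | k * x ≤ N b} * x ^ k ≤ ∑ b ∈ s, ((N b).choose k : 𝕜) :=
  calc #{b ∈ s | k * x ≤ N b} * x ^ k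
      ≤ ∑ b ∈ s with k * x ≤ N b, ((N b).choose k : 𝕜) := by
        rw [← nsmul_eq_mul]
        exact card_nsmul_le_sum _ _ _ fun b hb =>
          pow_le_choose_of_mul_le hx (mem_filter.mp hb).2
    _ ≤ ∑ b ∈ s, ((N b).choose k : 𝕜) :=
        sum_le_sum_of_subset_of_nonneg (filter_subset _ _) fun _ _ _ => Nat.cast_nonneg _

end CommRing

theorem choose_add_mul_succ_pow_le (m r k : ℕ) :
    m.choose (r + k) * (r + 1) ^ k ≤ m.choose r * (m - r) ^ k := by
  induction k with
  | zero => simp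
  | succ k ih =>
    calc m.choose (r + (k + 1)) * (r + 1) ^ (k + 1)
        = m.choose (r + k + 1) * (r + 1) * (r + 1) ^ k := by
          rw [← add_assoc, pow_succ', mul_assoc]
      _ ≤ m.choose (r + k + 1) * (r + k + 1) * (r + 1) ^ k := by gcongr; omega
      _ = m.choose (r + k) * (r + 1) ^ k * (m - (r + k)) := by
        rw [Nat.choose_succ_right_eq]; ring
      _ ≤ m.choose r * (m - r) ^ k * (m - r) := by gcongr; omega
      _ = m.choose r * (m - r) ^ (k + 1) := by ring

theorem choose_add_le_mul_div_pow {𝕜 : Type*} [Field 𝕜] [LinearOrder 𝕜]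
    [IsStrictOrderedRing 𝕜] {m r : ℕ} (hr : r ≤ m) (k : ℕ) :
    (m.choose (r + k) : 𝕜) ≤ m.choose r * ((m - r) / (r + 1)) ^ k := by
  have h : ((m.choose (r + k) * (r + 1) ^ k : ℕ) : 𝕜) ≤ (m.choose r * (m - r) ^ k : ℕ) :=
    Nat.cast_le.mpr (choose_add_mul_succ_pow_le m r k)
  push_cast [Nat.cast_sub hr] at h
  rwa [div_pow, ← mul_div_assoc, le_div_iff₀ (by positivity)]

end Binomial

/-- `B` is a basis of `f`: each of its proper subsets has a strictly smaller value. The largest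
cardinality of a basis is the combinatorial dimension of `f`. -/
def IsBasis {α T : Type*} [LT T] (f : Finset α → T) (B : Finset α) : Prop :=
  ∀ B' : Finset α, B' ⊂ B → f B' < f B

section Basis

variable {α ι T : Type*}

theorem exists_isBasis_subset_eq [PartialOrder T] {f : Finset α → T} (hf : Monotone f)
    (F : Finset α) : ∃ B ⊆ F, IsBasis f B ∧ f B = f F := by
  induction F using Finset.strongInduction with
  | H F ih =>
    by_cases hF : IsBasis f F
    · exact ⟨F, Subset.rfl, hF, rfl⟩
    · obtain ⟨G, hGF, hlt⟩ : ∃ G, G ⊂ F ∧ ¬ f G < f F := by simpa [IsBasis] using hF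
      have hfG : f G = f F := (hf hGF.subset).eq_of_not_lt hlt
      obtain ⟨B, hBG, hB, hfB⟩ := ih G hGF
      exact ⟨B, hBG.trans hGF.subset, hB, hfB.trans hfG⟩

variable [DecidableEq α] [Preorder T] {f : Finset α → T} {π : ι → α} {B : Finset ι}

theorem IsBasis.injOn (hB : IsBasis (fun R => f (R.image π)) B) : Set.InjOn π B := by
  obtain ⟨C, hCB, hinj, hC⟩ := exists_subset_injOn_image_eq_of_surjOn (f := π) B (B.image π)
    (by simp [Set.SurjOn])
  obtain rfl | hss := (coe_subset.mp hCB).eq_or_ssubset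
  · exact hinj
  · have hlt : f (C.image π) < f (B.image π) := hB C hss
    exact absurd (hC ▸ hlt) (lt_irrefl _)

theorem IsBasis.image (hB : IsBasis (fun R => f (R.image π)) B) : IsBasis f (B.image π) := by
  intro F hF
  obtain ⟨C, hCB, rfl⟩ := subset_image_iff.mp hF.subset
  exact hB C (hCB.ssubset_of_ne fun h => hF.ne (h ▸ rfl))

theorem IsBasis.card_le_of_image {d : ℕ} (dim : ∀ F, IsBasis f F → #F ≤ d)
    (hB : IsBasis (fun R => f (R.image π)) B) : #B ≤ d :=
  card_image_of_injOn hB.injOn ▸ dim _ hB.image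

end Basis

section Violators

variable {ι T : Type*} [Fintype ι] [DecidableEq ι]

/-- The indices whose addition to `R` strictly increases `g`. For an LP-type problem `f` on a
multiset `π`, take `g R = f (π(R))`; this is then the set `W_R`. -/
def violators [LT T] [DecidableLT T] (g : Finset ι → T) (R : Finset ι) : Finset ι :=
  {i | g R < g (insert i R)}

/-- The `k`-subsets `K` of `Q` all of whose elements violate `Q \ K`. -/
def violatingSubsets [LT T] [DecidableLT T] (g : Finset ι → T) (k : ℕ) (Q : Finset ι) :
    Finset (Finset ι) :=
  {K ∈ Q.powersetCard k | K ⊆ violators g (Q \ K)}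

section Preorder

variable [Preorder T] [DecidableLT T] {g : Finset ι → T} {B K Q : Finset ι}

theorem mem_violators {R : Finset ι} {i : ι} : i ∈ violators g R ↔ g R < g (insert i R) := by
  simp [violators]

theorem mem_violatingSubsets {k : ℕ} :
    K ∈ violatingSubsets g k Q ↔ (K ⊆ Q ∧ #K = k) ∧ K ⊆ violators g (Q \ K) := by
  simp [violatingSubsets]

theorem disjoint_violators (g : Finset ι → T) (R : Finset ι) : Disjoint R (violators g R) := by
  refine disjoint_left.mpr fun i hiR hi => ?_
  rw [mem_violators, insert_eq_of_mem hiR] at hi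
  exact hi.false

theorem not_disjoint_of_subset_violators (hg : Monotone g) (hBQ : B ⊆ Q) (hB : g B = g Q)
    (hKQ : K ⊆ Q) (hK : K.Nonempty) (hviol : K ⊆ violators g (Q \ K)) : ¬ Disjoint B K := by
  intro hBK
  obtain ⟨i, hi⟩ := hK
  have hlt : g (Q \ K) < g (insert i (Q \ K)) := mem_violators.mp (hviol hi)
  have hle : g (insert i (Q \ K)) ≤ g (Q \ K) :=
    calc g (insert i (Q \ K)) ≤ g Q := hg (insert_subset (hKQ hi) sdiff_subset)
      _ = g B := hB.symm
      _ ≤ g (Q \ K) := hg (subset_sdiff.mpr ⟨hBQ, hBK⟩)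
  exact hlt.not_ge hle

theorem erase_mem_violatingSubsets {k : ℕ} {b : ι} (hb : b ∈ K)
    (hK : K ∈ violatingSubsets g (k + 1) Q) :
    K.erase b ∈ violatingSubsets g k (Q.erase b) := by
  obtain ⟨⟨hKQ, hcard⟩, hviol⟩ := mem_violatingSubsets.mp hK
  have hsdiff : Q.erase b \ K.erase b = Q \ K := by
    rw [← erase_sdiff_distrib, erase_eq_of_notMem (notMem_sdiff_of_mem_right hb)]
  refine mem_violatingSubsets.mpr ⟨⟨erase_subset_erase b hKQ, ?_⟩, ?_⟩
  · rw [card_erase_of_mem hb, hcard, Nat.add_sub_cancel]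
  · rw [hsdiff]
    exact (erase_subset b K).trans hviol

theorem violatingSubsets_succ_subset (hg : Monotone g) (hBQ : B ⊆ Q) (hB : g B = g Q) (k : ℕ) :
    violatingSubsets g (k + 1) Q ⊆
      B.biUnion fun b => (violatingSubsets g k (Q.erase b)).image (insert b) := by
  intro K hK
  obtain ⟨⟨hKQ, hcard⟩, hviol⟩ := mem_violatingSubsets.mp hK
  have hne : K.Nonempty := card_pos.mp (by omega)
  obtain ⟨b, hbB, hbK⟩ := not_disjoint_iff.mp
    (not_disjoint_of_subset_violators hg hBQ hB hKQ hne hviol)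
  exact mem_biUnion.mpr ⟨b, hbB, mem_image.mpr
    ⟨K.erase b, erase_mem_violatingSubsets hbK hK, insert_erase hbK⟩⟩

theorem sum_choose_card_violators (g : Finset ι → T) (k r : ℕ) :
    ∑ R ∈ powersetCard r univ, (#(violators g R)).choose k =
      ∑ Q ∈ powersetCard (r + k) univ, #(violatingSubsets g k Q) := by
  simp_rw [← card_powersetCard k (violators g _), ← card_sigma]
  refine card_nbij' (fun p => ⟨p.1 ∪ p.2, p.2⟩) (fun p => ⟨p.1 \ p.2, p.2⟩) ?_ ?_ ?_ ?_
  · rintro ⟨R, K⟩ hp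
    simp only [coe_sigma, Set.mem_sigma_iff, mem_coe, mem_powersetCard, subset_univ, true_and,
      mem_violatingSubsets] at hp ⊢
    obtain ⟨hR, hKV, hK⟩ := hp
    have hRK : Disjoint R K := (disjoint_violators g R).mono_right hKV
    rw [card_union_of_disjoint hRK, union_sdiff_cancel_right hRK]
    exact ⟨by rw [hR, hK], ⟨subset_union_right, hK⟩, hKV⟩
  · rintro ⟨Q, K⟩ hp
    simp only [coe_sigma, Set.mem_sigma_iff, mem_coe, mem_powersetCard, subset_univ, true_and,
      mem_violatingSubsets] at hp ⊢
    obtain ⟨hQ, ⟨hKQ, hK⟩, hviol⟩ := hp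
    exact ⟨by rw [card_sdiff_of_subset hKQ, hQ, hK, Nat.add_sub_cancel], hviol, hK⟩
  · rintro ⟨R, K⟩ hp
    simp only [coe_sigma, Set.mem_sigma_iff, mem_coe, mem_powersetCard] at hp
    have hRK : Disjoint R K := (disjoint_violators g R).mono_right hp.2.1
    simp only [union_sdiff_cancel_right hRK]
  · rintro ⟨Q, K⟩ hp
    simp only [coe_sigma, Set.mem_sigma_iff, mem_coe, mem_violatingSubsets] at hp
    simp only [sdiff_union_of_subset hp.2.1.1]

end Preorder

variable [PartialOrder T] [DecidableLT T] {g : Finset ι → T} {d : ℕ}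

theorem card_violatingSubsets_le (hg : Monotone g) (dim : ∀ B, IsBasis g B → #B ≤ d)
    (k : ℕ) (Q : Finset ι) : #(violatingSubsets g k Q) ≤ d ^ k := by
  induction k generalizing Q with
  | zero => exact (card_filter_le _ _).trans (by simp)
  | succ k ih =>
    obtain ⟨B, hBQ, hbasis, hB⟩ := exists_isBasis_subset_eq hg Q
    calc #(violatingSubsets g (k + 1) Q)
        ≤ #(B.biUnion fun b => (violatingSubsets g k (Q.erase b)).image (insert b)) :=
          card_le_card (violatingSubsets_succ_subset hg hBQ hB k)
      _ ≤ #B * d ^ k :=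
          card_biUnion_le_card_mul _ _ _ fun b _ => card_image_le.trans (ih (Q.erase b))
      _ ≤ d * d ^ k := Nat.mul_le_mul_right _ (dim B hbasis)
      _ = d ^ (k + 1) := (pow_succ' d k).symm

theorem sum_choose_card_violators_le (hg : Monotone g) (dim : ∀ B, IsBasis g B → #B ≤ d)
    (k r : ℕ) :
    ∑ R ∈ powersetCard r univ, (#(violators g R)).choose k ≤
      (Fintype.card ι).choose (r + k) * d ^ k := by
  rw [sum_choose_card_violators]
  refine (sum_le_card_nsmul _ _ _ fun Q _ => card_violatingSubsets_le hg dim k Q).trans_eq ?_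
  rw [card_powersetCard, card_univ, smul_eq_mul]

theorem card_filter_le_card_violators_le (hg : Monotone g) (dim : ∀ B, IsBasis g B → #B ≤ d)
    (k : ℕ) {r : ℕ} {c : ℝ} (hc : 0 < c)
    (hrc : (r : ℝ) + 1 ≤ c * d * ((Fintype.card ι : ℝ) - r)) :
    (#{R ∈ powersetCard r univ |
        c * k * d * ((Fintype.card ι : ℝ) - r) / (r + 1) ≤ #(violators g R)} : ℝ) ≤
      (Fintype.card ι).choose r / c ^ k := by
  have hr : (r : ℝ) < Fintype.card ι :=
    sub_pos.mp (pos_of_mul_pos_right (r.cast_add_one_pos.trans_le hrc) (by positivity))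
  set q : ℝ := ((Fintype.card ι : ℝ) - r) / (r + 1) with hq
  have hthreshold : c * k * d * ((Fintype.card ι : ℝ) - r) / (r + 1) = k * (c * (d * q)) := by
    rw [hq]; ring
  have hx : 1 ≤ c * (d * q) := by
    rwa [hq, ← mul_assoc, ← mul_div_assoc, one_le_div (by positivity)]
  have hdq : 0 < d * q := pos_of_mul_pos_right (zero_lt_one.trans_le hx) hc.le
  rw [hthreshold, le_div_iff₀ (by positivity)]
  refine le_of_mul_le_mul_right ?_ (pow_pos hdq k)
  calc (#{R ∈ powersetCard r univ | k * (c * (d * q)) ≤ #(violators g R)} : ℝ)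
          * c ^ k * (d * q) ^ k
      = #{R ∈ powersetCard r univ | k * (c * (d * q)) ≤ #(violators g R)}
          * (c * (d * q)) ^ k := by rw [mul_pow c, mul_assoc]
    _ ≤ ∑ R ∈ powersetCard r univ, ((#(violators g R)).choose k : ℝ) :=
        card_filter_mul_pow_le_sum_choose _ _ hx k
    _ ≤ (Fintype.card ι).choose (r + k) * d ^ k := by
        exact_mod_cast sum_choose_card_violators_le hg dim k r
    _ ≤ (Fintype.card ι).choose r * q ^ k * d ^ k := by
        gcongr
        exact choose_add_le_mul_div_pow (Nat.cast_lt.mp hr).le k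
    _ = (Fintype.card ι).choose r * (d * q) ^ k := by rw [mul_pow, mul_right_comm, mul_assoc]

end Violators

end LPType

theorem stmt_6_general {α ι T : Type*} [DecidableEq α] [Fintype ι] [PartialOrder T]
    [DecidableLT T] {f : Finset α → T} (mono : Monotone f) {d : ℕ}
    (dim : ∀ B, LPType.IsBasis f B → #B ≤ d) (π : ι → α) (k : ℕ) {r : ℕ}
    {c : ℝ} (hc : 0 < c) (hrc : (r : ℝ) + 1 ≤ c * d * ((Fintype.card ι : ℝ) - r)) :
    (#{R ∈ powersetCard r (univ : Finset ι) |
        c * k * d * ((Fintype.card ι : ℝ) - r) / (r + 1) ≤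
          #{i : ι | f (R.image π) < f (insert (π i) (R.image π))}} : ℝ) ≤
      (Fintype.card ι).choose r / c ^ k := by
  classical
  have hmono : Monotone fun R : Finset ι => f (R.image π) := mono.comp (image_mono π)
  simpa only [LPType.violators, image_insert] using
    LPType.card_filter_le_card_violators_le hmono (fun B => LPType.IsBasis.card_le_of_image dim)
      k hc hrc

/-- Tail bound for the violator set size (Lemma 10): for any `c ≥ 1`, the
number of `r`-element subsets `R` whose violator set has size at least
`2c·k·d·(m-r)/(r+1)` is at most `C(m,r)/c^k`; equivalently, for a uniformly
random `R` the probability of this event is at most `1/c^k`. -/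
theorem stmt_6 {α ι T : Type*} [DecidableEq α] [Fintype ι] [LinearOrder T]
    (f : Finset α → T)
    (mono : ∀ F G : Finset α, F ⊆ G → f F ≤ f G)
    (locality : ∀ F G : Finset α, F ⊆ G → f F = f G →
      ∀ h : α, f G < f (insert h G) → f F < f (insert h F))
    (d : ℕ) (hd : 1 ≤ d)
    (dim : ∀ B : Finset α, (∀ B' : Finset α, B' ⊂ B → f B' < f B) → B.card ≤ d)
    (m : ℕ) (hm : Fintype.card ι = m)
    (π : ι → α) (k r : ℕ) (hk : 1 ≤ k) (hr : 1 ≤ r)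
    (hrm : (r : ℝ) < (m : ℝ) / 2 - (k : ℝ))
    (c : ℝ) (hc : 1 ≤ c) :
    (((Finset.powersetCard r (Finset.univ : Finset ι)).filter (fun R =>
        2 * c * (k : ℝ) * d * ((m : ℝ) - r) / ((r : ℝ) + 1) ≤
          ((Finset.univ.filter (fun i : ι =>
            f (R.image π) < f (insert (π i) (R.image π)))).card : ℝ))).card : ℝ)
      ≤ (Nat.choose m r : ℝ) / c ^ k := by
  subst hm
  have hk' : (1 : ℝ) ≤ k := Nat.one_le_cast.mpr hk
  have hcd : 1 ≤ c * d := one_le_mul_of_one_le_of_one_le hc (Nat.one_le_cast.mpr hd)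
  have hrc : (r : ℝ) + 1 ≤ 2 * c * d * ((Fintype.card ι : ℝ) - r) :=
    calc (r : ℝ) + 1 ≤ Fintype.card ι - r := by linarith
      _ ≤ 2 * c * d * (Fintype.card ι - r) :=
        le_mul_of_one_le_left (by linarith [r.cast_nonneg (α := ℝ)]) (by linarith)
  refine (stmt_6_general (fun F G => mono F G) dim π k (by positivity) hrc).trans ?_
  gcongr
  linarith
end

section
/- Let P be a finite set of points in the d-dimensional Euclidean space ℝ^d and let r(P) = inf over c ∈ ℝ^d of max_{p ∈ P} dist(c, p) (with r(∅) = 0). Then there exists a subset B ⊆ P with |B| ≤ d + 1 and r(B) = r(P). In other words, at most d + 1 points suffice to determine the smallest enclosing ball, so the combinatorial dimension of the smallest enclosing ball problem in ℝ^d is at most d + 1. -/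
open Finset

/-!
`P` lies in some open ball of radius `t` exactly when the open balls of radius `t` around the points
of `P` have a common point. By Helly's theorem in dimension `d`, this can be tested on the subsets
`B ⊆ P` with at most `d + 1` points. If all of these had `r(B) < r(P)`, the test at `t = r(P)` would
give `r(P) < r(P)`.
-/

open Metric Module

section PseudoMetricSpace

variable {X : Type*} [PseudoMetricSpace X] {B P : Finset X} {c : X} {t : ℝ}

/-- The smallest enclosing ball radius `r(P)` of a finite set of points, with centers ranging over
the whole space. The inner supremum is `0` when `p ∉ P`; as distances are nonnegative, this
leaves the maximum over a nonempty `P` unchanged, and it gives `r(∅) = 0`. -/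
noncomputable def enclosingRadius (P : Finset X) : ℝ :=
  ⨅ c : X, ⨆ p ∈ P, dist c p

lemma biSup_dist_nonneg (P : Finset X) (c : X) : 0 ≤ ⨆ p ∈ P, dist c p :=
  Real.iSup_nonneg fun _ ↦ Real.iSup_nonneg fun _ ↦ dist_nonneg

lemma enclosingRadius_nonneg (P : Finset X) : 0 ≤ enclosingRadius P :=
  Real.iInf_nonneg (biSup_dist_nonneg P)

lemma biSup_dist_lt_iff_subset_ball (ht : 0 < t) :
    ⨆ p ∈ P, dist c p < t ↔ (P : Set X) ⊆ ball c t := by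
  obtain rfl | ⟨p, hp⟩ := P.eq_empty_or_nonempty
  · simpa using ht
  · simpa only [mem_coe, Set.subset_def, mem_ball'] using
      P.finite_toSet.ciSup_lt_iff ⟨p, hp, Real.sSup_empty.trans_le dist_nonneg⟩

variable [Nonempty X]

lemma enclosingRadius_lt_iff_exists_subset_ball (ht : 0 < t) :
    enclosingRadius P < t ↔ ∃ c, (P : Set X) ⊆ ball c t := by
  have hbdd : BddBelow (Set.range fun c : X ↦ ⨆ p ∈ P, dist c p) :=
    ⟨0, Set.forall_mem_range.2 (biSup_dist_nonneg P)⟩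
  simp only [enclosingRadius, ciInf_lt_iff hbdd, biSup_dist_lt_iff_subset_ball ht]

lemma enclosingRadius_lt_iff_nonempty_biInter_ball (ht : 0 < t) :
    enclosingRadius P < t ↔ (⋂ p ∈ P, ball p t).Nonempty := by
  simp only [enclosingRadius_lt_iff_exists_subset_ball ht, Set.Nonempty, Set.mem_iInter₂,
    Set.subset_def, mem_coe, mem_ball_comm]

lemma enclosingRadius_mono (hBP : B ⊆ P) : enclosingRadius B ≤ enclosingRadius P := by
  refine le_of_forall_gt fun t ht ↦ ?_
  have ht₀ : 0 < t := (enclosingRadius_nonneg P).trans_lt ht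
  obtain ⟨c, hc⟩ := (enclosingRadius_lt_iff_exists_subset_ball ht₀).1 ht
  exact (enclosingRadius_lt_iff_exists_subset_ball ht₀).2 ⟨c, (coe_subset.2 hBP).trans hc⟩

end PseudoMetricSpace

section NormedSpace

variable {E : Type*} [SeminormedAddCommGroup E] [NormedSpace ℝ E] [FiniteDimensional ℝ E]

lemma enclosingRadius_lt_of_forall_card_le {P : Finset E} {t : ℝ}
    (h : ∀ B ⊆ P, #B ≤ finrank ℝ E + 1 → enclosingRadius B < t) : enclosingRadius P < t := by
  have ht : 0 < t :=
    (enclosingRadius_nonneg ∅).trans_lt (h ∅ (empty_subset P) (Nat.zero_le _))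
  rw [enclosingRadius_lt_iff_nonempty_biInter_ball ht]
  refine Convex.helly_theorem' (𝕜 := ℝ) (fun p _ ↦ convex_ball p t) fun B hBP hcard ↦ ?_
  exact (enclosingRadius_lt_iff_nonempty_biInter_ball ht).1 (h B hBP hcard)

theorem stmt_16_general (P : Finset E) :
    ∃ B ⊆ P, #B ≤ finrank ℝ E + 1 ∧ enclosingRadius B = enclosingRadius P := by
  by_contra! hne
  have hlt : ∀ B ⊆ P, #B ≤ finrank ℝ E + 1 → enclosingRadius B < enclosingRadius P :=
    fun B hBP hcard ↦ (enclosingRadius_mono hBP).lt_of_ne (hne B hBP hcard)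
  exact (enclosingRadius_lt_of_forall_card_le hlt).false

end NormedSpace

/-- At most `d + 1` points determine the smallest enclosing ball in `ℝ^d`:
for every finite set `P` of points in `d`-dimensional Euclidean space there is
a subset `B ⊆ P` with `|B| ≤ d + 1` whose smallest enclosing ball radius
`r(·) = ⨅ c, max_{p ∈ ·} dist c p` equals that of `P`. -/
theorem stmt_16 (d : ℕ) (P : Finset (EuclideanSpace ℝ (Fin d))) :
    ∃ B ⊆ P, B.card ≤ d + 1 ∧
      (⨅ c : EuclideanSpace ℝ (Fin d), ⨆ p ∈ B, dist c p)
        = ⨅ c : EuclideanSpace ℝ (Fin d), ⨆ p ∈ P, dist c p := by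
  simpa only [enclosingRadius, finrank_euclideanSpace_fin] using stmt_16_general P
end
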